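/- arXiv:2107.06308 — 2 statements merged into one kernel-verified Lean document; each statement's English description precedes it below -/
import Mathlib

section
/- Let k be a field of characteristic 2 and let Q_8 be the quaternion group of order 8. The dimensions of the group cohomology of Q_8 with trivial coefficients k are 4-periodic: for all s ≥ 0, dim_k H^s(Q_8; k) = 1 if s ≡ 0 or 3 (mod 4), and dim_k H^s(Q_8; k) = 2 if s ≡ 1 or 2 (mod 4). (This reflects the ring isomorphism H^*(Q_8; k) ≅ k[x₁, x₂, e₄]/(x₁² + x₁x₂ + x₂², x₁²x₂ + x₁x₂²) with |x₁| = |x₂| = 1 and |e₄| = 4.) -/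
namespace QuatCoh

open CategoryTheory

/-- The quaternion group of order eight. -/
abbrev Q := QuaternionGroup 2

/-- Ranks of the free modules in the periodic resolution. -/
def rk : ℕ → ℕ
  | 0 => 1
  | 1 => 2
  | 2 => 2
  | 3 => 1
  | n + 4 => rk n

/-- Numbering of the elements of the group. -/
def idx : Q → ℕ
  | .a i => i.val
  | .xa i => 4 + i.val

/-- Supports (as bit masks) of the entries of the differentials. -/
def mask : ℕ → ℕ → ℕ → ℕ
  | 0, _, 0 => 9
  | 0, _, _ => 65
  | 1, 0, 0 => 9
  | 1, 0, _ => 33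
  | 1, _, 0 => 65
  | 1, _, _ => 9
  | 2, 0, _ => 9
  | 2, _, _ => 33
  | 3, _, _ => 255
  | n + 4, i, j => mask n i j

/-- The differentials over the field with two elements. -/
def M (n : ℕ) : Matrix (Fin (rk n) × Q) (Fin (rk (n + 1)) × Q) (ZMod 2) :=
  fun p q => if (mask n p.1 q.1).testBit (idx (p.2⁻¹ * q.2)) then 1 else 0

/-- Table for the contracting homotopy. -/
def tab : ℕ → List ℕ
  | 0 => [14, 12, 8, 0, 224, 192, 128, 0, 240, 0, 0, 0, 0, 0, 0, 0]
  | 1 => [65152, 32768, 2056, 2048, 61056, 10240, 18440, 0, 18568, 57992, 0, 0, 0, 0, 0, 0]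
  | 2 => [32768, 16512, 1024, 2176, 6272, 9216, 128, 0]
  | 3 => [128, 0, 0, 0, 0, 0, 0, 0]
  | n + 4 => tab n

/-- The contracting homotopy. -/
def H (n : ℕ) : Matrix (Fin (rk (n + 1)) × Q) (Fin (rk n) × Q) (ZMod 2) :=
  fun p q => if ((tab n).getD (8 * p.1 + idx p.2) 0).testBit (8 * q.1 + idx q.2) then 1 else 0

set_option maxRecDepth 100000 in
lemma M_sq : ∀ n, M n * M (n + 1) = 0
  | 0 => by decide +kernel
  | 1 => by decide +kernel
  | 2 => by decide +kernel
  | 3 => by decide +kernel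
  | n + 4 => M_sq n

set_option maxRecDepth 100000 in
lemma M_H : ∀ n, M (n + 1) * H (n + 1) + H n * M n = 1
  | 0 => by decide +kernel
  | 1 => by decide +kernel
  | 2 => by decide +kernel
  | 3 => by decide +kernel
  | n + 4 => M_H n

lemma M_sum : ∀ n j q, ∑ u : Q, M n (j, u) q = 0
  | 0 => by decide +kernel
  | 1 => by decide +kernel
  | 2 => by decide +kernel
  | 3 => by decide +kernel
  | n + 4 => M_sum n

lemma M_three (p q) : M 3 p q = 1 := by
  have h : M 3 = Matrix.of fun _ _ => 1 := by decide +kernel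
  rw [h, Matrix.of_apply]

lemma M_equi (n j i) (g u v : Q) : M n (j, g⁻¹ * u) (i, v) = M n (j, u) (i, g * v) := by
  simp [M, mul_assoc]

variable (k : Type) [Field k]

/-- The free representation on `r` generators, as functions. -/
def regRep (r : ℕ) : Representation k Q (Fin r × Q → k) where
  toFun g := LinearMap.funLeft k k (fun p => (p.1, g⁻¹ * p.2))
  map_one' := by ext; simp [LinearMap.funLeft]
  map_mul' g h := by ext; simp [LinearMap.funLeft, mul_assoc]

lemma regRep_apply (r : ℕ) (g : Q) (x : Fin r × Q → k) (p) :
    regRep k r g x p = x (p.1, g⁻¹ * p.2) := rfl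

/-- The free representation on `r` generators, as an object of `Rep`. -/
noncomputable abbrev F (r : ℕ) : Rep.{0} k Q := Rep.of (regRep k r)

lemma hom_ext' {A B : Rep.{0} k Q} {f g : A ⟶ B} (h : ∀ x, f.hom x = g.hom x) : f = g := by
  apply Rep.hom_ext
  exact DFunLike.ext _ _ h

/-- Morphisms out of the free representation. -/
noncomputable def lift {r : ℕ} (A : Rep.{0} k Q) (c : Fin r → A) : F k r ⟶ A :=
  Rep.ofHom
  { toFun x := ∑ p, x p • A.ρ p.2 (c p.1)
    map_add' x y := by simp [add_smul, Finset.sum_add_distrib]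
    map_smul' a x := by simp [mul_smul, Finset.smul_sum]
    isIntertwining' g := by
      apply LinearMap.ext
      intro x
      simp only [LinearMap.comp_apply, LinearMap.coe_mk, AddHom.coe_mk, map_sum, map_smul,
        regRep_apply]
      refine Fintype.sum_equiv (Equiv.prodCongr (Equiv.refl _) (Equiv.mulLeft g⁻¹)) _ _ ?_
      rintro ⟨i, u⟩
      simp [← Module.End.mul_apply, ← map_mul] }

lemma lift_apply {r : ℕ} (A : Rep.{0} k Q) (c : Fin r → A) (x : Fin r × Q → k) :
    (lift k A c).hom x = ∑ p, x p • A.ρ p.2 (c p.1) := rfl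

/-- The generators. -/
noncomputable def gen {r : ℕ} (i : Fin r) : Fin r × Q → k := Pi.single (i, 1) 1

lemma hom_apply {r : ℕ} {A : Rep.{0} k Q} (f : F k r ⟶ A) (x : Fin r × Q → k) :
    f.hom x = ∑ p, x p • A.ρ p.2 (f.hom (gen k p.1)) := by
  have h1 : ∀ p : Fin r × Q, regRep k r p.2 (gen k p.1) = Pi.single p 1 := by
    intro p
    ext q
    simp only [regRep_apply, gen, Pi.single_apply, Prod.ext_iff]
    congr 1
    simp [inv_mul_eq_one, eq_comm]
  have h2 : x = ∑ p, x p • regRep k r p.2 (gen k p.1) := by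
    simp only [h1]
    ext q
    simp [Finset.sum_apply, Pi.single_apply]
  conv_lhs => rw [h2]
  rw [map_sum]
  refine Finset.sum_congr rfl fun p _ => ?_
  rw [map_smul]
  congr 1
  exact Rep.hom_comm_apply f p.2 _

lemma lift_gen {r : ℕ} (A : Rep.{0} k Q) (c : Fin r → A) (i : Fin r) :
    (lift k A c).hom (gen k i) = c i := by
  rw [lift_apply, Finset.sum_eq_single (i, 1)]
  · simp [gen]
  · intro p _ hp
    simp [gen, hp]
  · simp

instance (r : ℕ) : Projective (F k r) where
  factors {E X} f e _ := by
    have he := (Rep.epi_iff_surjective e).1 inferInstance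
    choose c hc using fun i => he (f.hom (gen k i))
    refine ⟨lift k E c, ?_⟩
    refine hom_ext' k fun x => ?_
    have : e.hom ((lift k E c).hom x) = f.hom x := by
      rw [lift_apply, hom_apply k f, map_sum]
      refine Finset.sum_congr rfl fun p _ => ?_
      rw [map_smul, ← hc]
      congr 1
      exact Rep.hom_comm_apply e p.2 _
    exact this

/-- Homomorphisms out of a free representation. -/
noncomputable def homEquiv (r : ℕ) (A : Rep.{0} k Q) : (F k r ⟶ A) ≃ₗ[k] (Fin r → A) where
  toFun f i := f.hom (gen k i)
  map_add' _ _ := rfl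
  map_smul' _ _ := rfl
  invFun := lift k A
  left_inv f := by
    refine hom_ext' k fun x => ?_
    have : (lift k A fun i => f.hom (gen k i)).hom x = f.hom x := by
      rw [hom_apply k f, lift_apply]
    exact this
  right_inv c := by
    ext i
    exact lift_gen k A c i

/-- The augmentation. -/
noncomputable def aug : F k 1 ⟶ Rep.trivial k Q k := lift k (Rep.trivial k Q k) (fun _ => (1 : k))

lemma aug_apply (x : Fin 1 × Q → k) : (aug k).hom x = ∑ p, x p := by
  rw [aug, lift_apply]
  simp

lemma aug_surj (a : k) : ∃ x : Fin 1 × Q → k, (aug k).hom x = a := by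
  refine ⟨Pi.single (0, 1) a, ?_⟩
  rw [aug_apply]
  simp

variable [CharP k 2]

/-- Base change to `k`. -/
noncomputable def Mk (n : ℕ) : Matrix (Fin (rk n) × Q) (Fin (rk (n + 1)) × Q) k :=
  (M n).map (ZMod.castHom (dvd_refl 2) k)

/-- Base change to `k` of the homotopy. -/
noncomputable def Hk (n : ℕ) : Matrix (Fin (rk (n + 1)) × Q) (Fin (rk n) × Q) k :=
  (H n).map (ZMod.castHom (dvd_refl 2) k)

lemma Mk_sq (n) : Mk k n * Mk k (n + 1) = 0 := by
  rw [Mk, Mk, ← Matrix.map_mul, M_sq, Matrix.map_zero _ (map_zero _)]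

lemma Mk_Hk (n) : Mk k (n + 1) * Hk k (n + 1) + Hk k n * Mk k n = 1 := by
  rw [Mk, Mk, Hk, Hk, ← Matrix.map_mul, ← Matrix.map_mul, ← Matrix.map_add _ (map_add _), M_H,
    Matrix.map_one _ (map_zero _) (map_one _)]

lemma Mk_sum (n j q) : ∑ u : Q, Mk k n (j, u) q = 0 := by
  simp only [Mk, Matrix.map_apply]
  rw [← map_sum, M_sum, map_zero]

/-- The differentials. -/
noncomputable def dd (n : ℕ) : F k (rk (n + 1)) ⟶ F k (rk n) :=
  Rep.ofHom
  { (Mk k n).mulVecLin with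
    isIntertwining' g := by
      apply LinearMap.ext
      intro x
      ext ⟨j, u⟩
      change ∑ q, Mk k n (j, u) q * x (q.1, g⁻¹ * q.2) = ∑ q, Mk k n (j, g⁻¹ * u) q * x q
      refine Fintype.sum_equiv (Equiv.prodCongr (Equiv.refl _) (Equiv.mulLeft g⁻¹)) _ _ ?_
      rintro ⟨i, v⟩
      simp [Mk, M_equi] }

lemma dd_apply (n) (x : Fin (rk (n + 1)) × Q → k) : (dd k n).hom x = (Mk k n).mulVec x := rfl

lemma dd_sq (n) : dd k (n + 1) ≫ dd k n = 0 := by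
  refine hom_ext' k fun x => ?_
  have : (dd k n).hom ((dd k (n + 1)).hom x) = 0 := by
    rw [dd_apply, dd_apply, Matrix.mulVec_mulVec, Mk_sq, Matrix.zero_mulVec]
  exact this

/-- Every map to a trivial representation kills the differentials. -/
lemma dd_comp (n) (f : F k (rk n) ⟶ Rep.trivial k Q k) : dd k n ≫ f = 0 := by
  refine hom_ext' k fun x => ?_
  have : f.hom ((dd k n).hom x) = 0 := by
    rw [hom_apply k f, dd_apply, Fintype.sum_prod_type]
    refine Finset.sum_eq_zero fun j _ => ?_
    have : ∑ u : Q, (Mk k n).mulVec x (j, u) = 0 := by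
      simp only [Matrix.mulVec, dotProduct]
      rw [Finset.sum_comm]
      simp [← Finset.sum_mul, Mk_sum]
    have h2 := Finset.sum_smul (s := Finset.univ) (f := fun u => (Mk k n).mulVec x (j, u))
      (x := f.hom (gen k j))
    rw [this, zero_smul] at h2
    exact h2.symm
  exact this

lemma exact_succ (n) (x : Fin (rk (n + 1)) × Q → k) (hx : (dd k n).hom x = 0) :
    ∃ y, (dd k (n + 1)).hom y = x := by
  refine ⟨(Hk k (n + 1)).mulVec x, ?_⟩
  have h := congrArg (fun A => A.mulVec x) (Mk_Hk k n)
  rw [dd_apply] at hx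
  simp only [Matrix.add_mulVec, ← Matrix.mulVec_mulVec, hx, Matrix.mulVec_zero, add_zero,
    Matrix.one_mulVec] at h
  exact h

lemma exact_four (x : Fin (rk 4) × Q → k) (hx : ∑ p, x p = 0) :
    ∃ y, (dd k 4).hom y = x := by
  refine exact_succ k 3 x ?_
  rw [dd_apply]
  ext p
  simp only [Matrix.mulVec, dotProduct, Mk, Matrix.map_apply]
  refine Eq.trans (Finset.sum_congr rfl fun q _ => ?_) hx
  rw [M_three, map_one, one_mul]

lemma exact_zero (x : Fin 1 × Q → k) (hx : ∑ p, x p = 0) :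
    ∃ y, (dd k 0).hom y = x := exact_four k x hx

/-- The complex. -/
noncomputable def cx : ChainComplex (Rep.{0} k Q) ℕ :=
  ChainComplex.of (fun n => F k (rk n)) (dd k) (dd_sq k)

lemma cx_d (n) : (cx k).d (n + 1) n = dd k n :=
  ChainComplex.of_d (fun n => F k (rk n)) (dd k) n

/-- The augmentation as a chain map. -/
noncomputable def augπ : cx k ⟶ (ChainComplex.single₀ (Rep k Q)).obj (Rep.trivial k Q k) :=
  ((cx k).toSingle₀Equiv _).symm ⟨aug k, by rw [cx_d]; exact dd_comp k 0 (aug k)⟩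

lemma quasi : QuasiIso (augπ k) where
  quasiIsoAt m := by
    cases m with
    | zero =>
      rw [ChainComplex.quasiIsoAt₀_iff, ShortComplex.quasiIso_iff_of_zeros' _ rfl rfl rfl]
      constructor
      · apply (forget₂ _ (ModuleCat k)).reflects_exact_of_faithful
        rw [ShortComplex.moduleCat_exact_iff]
        intro x hx
        obtain ⟨y, hy⟩ := exact_zero k x ((aug_apply k x).symm.trans hx)
        refine ⟨y, ?_⟩
        have : ((cx k).d 1 0).hom y = x := by rw [cx_d]; exact hy
        exact this
      · rw [Rep.epi_iff_surjective]
        exact aug_surj k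
    | succ m =>
      rw [quasiIsoAt_iff_exactAt' (hL := ChainComplex.exactAt_succ_single_obj ..),
          HomologicalComplex.exactAt_iff' _ (m + 2) (m + 1) m (by simp) (by simp)]
      apply (forget₂ _ (ModuleCat k)).reflects_exact_of_faithful
      rw [ShortComplex.moduleCat_exact_iff]
      intro x hx
      have hx' : ((cx k).d (m + 1) m).hom x = 0 := hx
      rw [cx_d] at hx'
      obtain ⟨y, hy⟩ := exact_succ k m x hx'
      refine ⟨y, ?_⟩
      have : ((cx k).d (m + 2) (m + 1)).hom y = x := by rw [cx_d]; exact hy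
      exact this

/-- The resolution. -/
noncomputable def res : ProjectiveResolution (Rep.trivial k Q k) where
  complex := cx k
  projective n := inferInstanceAs (Projective (F k (rk n)))
  π := augπ k
  quasiIso := quasi k

lemma yoneda_d (i j) : ((cx k).linearYonedaObj k (Rep.trivial k Q k)).d i j = 0 := by
  by_cases h : i + 1 = j
  · subst h
    ext f
    have : (cx k).d (i + 1) i ≫ f = 0 := by rw [cx_d]; exact dd_comp k i f
    exact this
  · exact HomologicalComplex.shape _ _ _ h

lemma finrank_eq (s) :
    Module.finrank k (groupCohomology (Rep.trivial k Q k) s) = rk s := by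
  let K := (cx k).linearYonedaObj k (Rep.trivial k Q k)
  have e1 : groupCohomology (Rep.trivial k Q k) s ≅ K.homology s :=
    groupCohomologyIso _ s (res k)
  have e2 : K.X s ≅ K.homology s :=
    (K.iCyclesIso s (s + 1) (by simp) (yoneda_d k _ _)).symm ≪≫
      K.isoHomologyπ _ s rfl (yoneda_d k _ _)
  have e3 : (K.X s : Type) ≃ₗ[k] (Fin (rk s) → k) := homEquiv k (rk s) (Rep.trivial k Q k)
  rw [((e1 ≪≫ e2.symm).toLinearEquiv ≪≫ₗ e3).finrank_eq]
  simp

lemma rk_eq : ∀ s, rk s = if s % 4 = 0 ∨ s % 4 = 3 then 1 else 2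
  | 0 => rfl
  | 1 => rfl
  | 2 => rfl
  | 3 => rfl
  | n + 4 => by
    rw [Nat.add_mod_right]
    exact rk_eq n

end QuatCoh


/-- For `k` a field of characteristic `2` and `Q_8` the quaternion group of order 8
(`QuaternionGroup 2`), the dimensions of `H^s(Q_8; k)` are 4-periodic:
`dim H^s = 1` if `s ≡ 0, 3 (mod 4)` and `dim H^s = 2` if `s ≡ 1, 2 (mod 4)`. -/
theorem groupCohomology_quaternion_dimensions
    (k : Type) [Field k] [CharP k 2] (s : ℕ) :
    Module.finrank k (groupCohomology (Rep.trivial k (QuaternionGroup 2) k) s) =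
      if s % 4 = 0 ∨ s % 4 = 3 then 1 else 2 := by
  rw [← QuatCoh.rk_eq]
  exact QuatCoh.finrank_eq k s
end

section
/- Let k be a field of characteristic 2, let n ≥ 4, and let Q_{2^n} be the generalized quaternion group of order 2^n. The dimensions of the group cohomology of Q_{2^n} with trivial coefficients k are 4-periodic: for all s ≥ 0, dim_k H^s(Q_{2^n}; k) = 1 if s ≡ 0 or 3 (mod 4), and dim_k H^s(Q_{2^n}; k) = 2 if s ≡ 1 or 2 (mod 4). (This reflects the ring isomorphism H^*(Q_{2^n}; k) ≅ k[x₁, x₂, e₄]/(x₁x₂, x₁³ + x₂³) with |x₁| = |x₂| = 1 and |e₄| = 4.) -/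
open CategoryTheory CategoryTheory.Limits

namespace QuatCoh

section General

variable {k G : Type} [Field k] [Group G]

/-- dimension of the `n`-th cohomology -/
noncomputable def hdim (A : Rep.{0} k G) (n : ℕ) : ℕ := Module.finrank k (groupCohomology A n)

/-- the representation of `G` on functions `G → V` by right translation -/
def funρ (k G V : Type) [Field k] [Group G] [AddCommGroup V] [Module k V] :
    Representation k G (G → V) where
  toFun g := LinearMap.funLeft k V (· * g)
  map_one' := by ext; simp [LinearMap.funLeft]
  map_mul' _ _ := by ext; simp [LinearMap.funLeft, mul_assoc]

@[simp] lemma funρ_apply (V : Type) [AddCommGroup V] [Module k V] (g : G) (f : G → V) (h : G) :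
    funρ k G V g f h = f (h * g) := rfl

variable (k G) in
/-- bundled -/
noncomputable abbrev funRep (V : Type) [AddCommGroup V] [Module k V] : Rep.{0} k G :=
  Rep.of (funρ k G V)

/-- comparison with the coinduced representation -/
noncomputable def funEquiv (V : Type) [AddCommGroup V] [Module k V] :
    (funρ k G V).Equiv
      (Representation.coind (⊥ : Subgroup G).subtype (Representation.trivial k (⊥ : Subgroup G) V))
    where
  toFun f := ⟨f, by
    rintro ⟨g, hg⟩ h
    rw [Subgroup.mem_bot] at hg
    subst hg
    simp⟩
  map_add' _ _ := rfl
  map_smul' _ _ := rfl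
  invFun f := f.1
  left_inv _ := rfl
  right_inv _ := rfl
  isIntertwining' g := by ext; rfl

lemma funRep_acyclic (V : Type) [AddCommGroup V] [Module k V] (n : ℕ) :
    IsZero (groupCohomology (funRep k G V) (n + 1)) := by
  have h := isZero_groupCohomology_succ_of_subsingleton
    (Rep.trivial k (⊥ : Subgroup G) V) n
  refine h.of_iso ?_
  exact (groupCohomology.functor k G (n + 1)).mapIso (Rep.mkIso (funEquiv V)) ≪≫
    groupCohomology.coindIso (Rep.trivial k (⊥ : Subgroup G) V) (n + 1)

lemma hdim_zero (A : Rep.{0} k G) : hdim A 0 = Module.finrank k A.ρ.invariants :=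
  (groupCohomology.H0Iso A).toLinearEquiv.finrank_eq

lemma hdim_zero_trivial : hdim (Rep.trivial k G k) 0 = 1 := by
  rw [hdim_zero, Representation.invariants_eq_top]
  simp

lemma mem_invariants_funρ {V : Type} [AddCommGroup V] [Module k V] {f : G → V}
    (hf : f ∈ (funρ k G V).invariants) (g : G) : f g = f 1 := by
  have := congrFun (hf g) 1
  simpa using this

lemma hdim_zero_funRep (V : Type) [AddCommGroup V] [Module k V] :
    hdim (funRep k G V) 0 = Module.finrank k V := by
  rw [hdim_zero]
  refine LinearEquiv.finrank_eq ?_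
  exact
    { toFun := fun f => f.1 1
      map_add' := fun _ _ => rfl
      map_smul' := fun _ _ => rfl
      invFun := fun v => ⟨fun _ => v, fun g => rfl⟩
      left_inv := fun f => Subtype.ext (funext fun g => (mem_invariants_funρ f.2 g).symm)
      right_inv := fun _ => rfl }

lemma map_zero_eq_zero {A B : Rep.{0} k G} (f : A ⟶ B)
    (hf : ∀ x ∈ A.ρ.invariants, f.hom x = 0) : (groupCohomology.functor k G 0).map f = 0 := by
  change groupCohomology.map (MonoidHom.id G) f 0 = 0
  rw [← cancel_mono (groupCohomology.H0Iso B).hom, groupCohomology.map_id_comp_H0Iso_hom,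
    zero_comp]
  have : (Rep.invariantsFunctor k G).map f = 0 := by
    ext x
    exact Subtype.ext (hf x.1 x.2)
  rw [this, comp_zero]

lemma shift {A B C : Rep.{0} k G} (f : A ⟶ B) (g : B ⟶ C) (w : f ≫ g = 0)
    (hX : (ShortComplex.mk f g w).ShortExact)
    (hP : ∀ n, IsZero (groupCohomology B (n + 1)))
    (h0 : (groupCohomology.functor k G 0).map g = 0) :
    hdim A 0 = hdim B 0 ∧ ∀ n, hdim A (n + 1) = hdim C n := by
  constructor
  · have e := groupCohomology.mapShortComplex₂_exact hX 0
    have : Epi ((groupCohomology.functor k G 0).map f) := e.epi_f h0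
    have : Mono f := hX.mono_f
    have : Mono ((groupCohomology.functor k G 0).map f) :=
      groupCohomology.mono_map_0_of_mono f
    have := isIso_of_mono_of_epi ((groupCohomology.functor k G 0).map f)
    exact (asIso ((groupCohomology.functor k G 0).map f)).toLinearEquiv.finrank_eq
  · intro n
    have hi : IsIso (groupCohomology.δ hX n (n + 1) rfl) := by
      cases n with
      | succ n => exact groupCohomology.isIso_δ_of_isZero hX _ (hP _) (hP _)
      | zero =>
        have := groupCohomology.epi_δ_of_isZero hX 0 (hP 0)
        have e := groupCohomology.mapShortComplex₃_exact hX (i := 0) (j := 1) rfl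
        have : Mono (groupCohomology.δ hX 0 1 rfl) := e.mono_g h0
        exact isIso_of_mono_of_epi _
    exact (asIso (groupCohomology.δ hX n (n + 1) rfl)).symm.toLinearEquiv.finrank_eq

lemma comp_zero_of {A B C : Rep.{0} k G} (f : A ⟶ B) (g : B ⟶ C)
    (h : ∀ x, g.hom (f.hom x) = 0) : f ≫ g = 0 :=
  Rep.hom_ext (Representation.IntertwiningMap.ext (LinearMap.ext h))

lemma exact_of {A B C : Rep.{0} k G} (f : A ⟶ B) (g : B ⟶ C) (w : f ≫ g = 0)
    (h : ∀ x : B, g.hom x = 0 → ∃ y, f.hom y = x) : (ShortComplex.mk f g w).Exact := by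
  rw [← ShortComplex.exact_map_iff_of_faithful _ (forget₂ (Rep k G) (ModuleCat k)),
    ShortComplex.moduleCat_exact_iff]
  exact h

lemma kernel_ses {A B C D : Rep.{0} k G} (i : A ⟶ B) (f : B ⟶ C) (g : C ⟶ D)
    [Mono i] (w : i ≫ f = 0) (w' : f ≫ g = 0)
    (e : (ShortComplex.mk i f w).Exact) (e' : (ShortComplex.mk f g w').Exact) :
    (ShortComplex.mk i (kernel.lift g f w') (by
      rw [← cancel_mono (kernel.ι g)]; simp [w])).ShortExact where
  exact := by
    let φ : ShortComplex.mk i (kernel.lift g f w') (by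
      rw [← cancel_mono (kernel.ι g)]; simp [w]) ⟶ ShortComplex.mk i f w :=
      { τ₁ := 𝟙 _, τ₂ := 𝟙 _, τ₃ := kernel.ι g }
    have : Epi φ.τ₁ := inferInstanceAs (Epi (𝟙 A))
    have : IsIso φ.τ₂ := inferInstanceAs (IsIso (𝟙 B))
    have : Mono φ.τ₃ := inferInstanceAs (Mono (kernel.ι g))
    exact (ShortComplex.exact_iff_of_epi_of_isIso_of_mono φ).2 e
  mono_f := inferInstance
  epi_g := (ShortComplex.exact_iff_epi_kernel_lift _).1 e'

lemma kernel_shift_aux {B C D : Rep.{0} k G} (f : B ⟶ C) (g : C ⟶ D) (w' : f ≫ g = 0)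
    (h0 : ∀ x ∈ B.ρ.invariants, f.hom x = 0) :
    (groupCohomology.functor k G 0).map (kernel.lift g f w') = 0 := by
  have : Mono ((groupCohomology.functor k G 0).map (kernel.ι g)) :=
        groupCohomology.mono_map_0_of_mono _
  rw [← cancel_mono ((groupCohomology.functor k G 0).map (kernel.ι g)), ← Functor.map_comp,
      kernel.lift_ι, zero_comp]
  exact map_zero_eq_zero f h0

lemma kernel_shift {A B C D : Rep.{0} k G} (i : A ⟶ B) (f : B ⟶ C) (g : C ⟶ D)
    [Mono i] (w : i ≫ f = 0) (w' : f ≫ g = 0)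
    (e : (ShortComplex.mk i f w).Exact) (e' : (ShortComplex.mk f g w').Exact)
    (hP : ∀ n, IsZero (groupCohomology B (n + 1)))
    (h0 : ∀ x ∈ B.ρ.invariants, f.hom x = 0) :
    hdim A 0 = hdim B 0 ∧ ∀ n, hdim A (n + 1) = hdim (kernel g) n :=
  shift i _ _ (kernel_ses i f g w w' e e') hP (kernel_shift_aux f g w' h0)

/-- cohomology from a four-term periodic complex -/
lemma periodic {V₀ V₁ V₂ V₃ : Type} [AddCommGroup V₀] [Module k V₀] [AddCommGroup V₁]
    [Module k V₁] [AddCommGroup V₂] [Module k V₂] [AddCommGroup V₃] [Module k V₃]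
    (i : Rep.trivial k G k ⟶ funRep k G V₀) (d₀ : funRep k G V₀ ⟶ funRep k G V₁)
    (d₁ : funRep k G V₁ ⟶ funRep k G V₂) (d₂ : funRep k G V₂ ⟶ funRep k G V₃)
    (p : funRep k G V₃ ⟶ Rep.trivial k G k) [Mono i] [Epi p]
    (w₀ : i ≫ d₀ = 0) (w₁ : d₀ ≫ d₁ = 0) (w₂ : d₁ ≫ d₂ = 0) (w₃ : d₂ ≫ p = 0)
    (e₀ : (ShortComplex.mk i d₀ w₀).Exact) (e₁ : (ShortComplex.mk d₀ d₁ w₁).Exact)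
    (e₂ : (ShortComplex.mk d₁ d₂ w₂).Exact) (e₃ : (ShortComplex.mk d₂ p w₃).Exact)
    (z₀ : ∀ x ∈ (funRep k G V₀).ρ.invariants, d₀.hom x = 0)
    (z₁ : ∀ x ∈ (funRep k G V₁).ρ.invariants, d₁.hom x = 0)
    (z₂ : ∀ x ∈ (funRep k G V₂).ρ.invariants, d₂.hom x = 0)
    (z₃ : ∀ x ∈ (funRep k G V₃).ρ.invariants, p.hom x = 0) :
    hdim (Rep.trivial k G k) 0 = 1 ∧
    hdim (Rep.trivial k G k) 1 = Module.finrank k V₁ ∧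
    hdim (Rep.trivial k G k) 2 = Module.finrank k V₂ ∧
    hdim (Rep.trivial k G k) 3 = Module.finrank k V₃ ∧
    ∀ n, hdim (Rep.trivial k G k) (n + 4) = hdim (Rep.trivial k G k) n := by
  have kex : ∀ {A B : Rep.{0} k G} (f : A ⟶ B),
      (ShortComplex.mk (kernel.ι f) f (kernel.condition f)).Exact := fun f =>
    ShortComplex.exact_of_f_is_kernel _ (kernelIsKernel f)
  have s₀ := kernel_shift i d₀ d₁ w₀ w₁ e₀ e₁ (funRep_acyclic V₀) z₀
  have s₁ := kernel_shift (kernel.ι d₁) d₁ d₂ _ w₂ (kex _) e₂ (funRep_acyclic V₁) z₁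
  have s₂ := kernel_shift (kernel.ι d₂) d₂ p _ w₃ (kex _) e₃ (funRep_acyclic V₂) z₂
  have s₃ := shift (kernel.ι p) p (kernel.condition p)
    { exact := kex p, mono_f := inferInstance, epi_g := inferInstance }
    (funRep_acyclic V₃) (map_zero_eq_zero p z₃)
  refine ⟨hdim_zero_trivial, ?_, ?_, ?_, fun n => ?_⟩
  · rw [s₀.2 0, s₁.1, hdim_zero_funRep]
  · rw [s₀.2 1, s₁.2 0, s₂.1, hdim_zero_funRep]
  · rw [s₀.2 2, s₁.2 1, s₂.2 0, s₃.1, hdim_zero_funRep]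
  · rw [s₀.2 (n + 3), s₁.2 (n + 2), s₂.2 (n + 1), s₃.2 n]

end General

section Algebra

open QuaternionGroup

lemma mem_of_dual {k ι : Type} [Field k] [Fintype ι] [DecidableEq ι] (S : Submodule k (ι → k))
    (h : ∀ c : ι → k, (∀ s ∈ S, ∑ i, s i * c i = 0) → ∀ i j, c i = c j)
    (w : ι → k) (hw : ∑ i, w i = 0) : w ∈ S := by
  by_contra hS
  obtain ⟨φ, h1, h2⟩ := Submodule.exists_le_ker_of_notMem hS
  have key : ∀ v : ι → k, φ v = ∑ i, v i * φ (Pi.single i 1) := fun v => by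
    conv_lhs => rw [pi_eq_sum_univ v]
    rw [map_sum]
    refine Finset.sum_congr rfl fun i _ => ?_
    rw [map_smul, smul_eq_mul]
    congr 2
    ext j
    simp [Pi.single_apply, eq_comm]
  have hc := h (fun i => φ (Pi.single i 1)) fun s hs => by
    rw [← key]; exact h2 hs
  apply h1
  rw [key]
  rcases isEmpty_or_nonempty ι with hι | ⟨⟨i0⟩⟩
  · simp
  · rw [Finset.sum_congr rfl fun i _ => by rw [hc i i0], ← Finset.sum_mul, hw, zero_mul]

lemma sum_range_zmod {k : Type} [AddCommMonoid k] (N : ℕ) [NeZero N] (q : ZMod N → k) :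
    ∑ j ∈ Finset.range N, q (j : ZMod N) = ∑ i, q i := by
  refine Finset.sum_bij' (fun j _ => (j : ZMod N)) (fun i _ => i.val) ?_ ?_ ?_ ?_ ?_
  · simp
  · intro i _; simpa using ZMod.val_lt i
  · intro j hj; exact ZMod.val_cast_of_lt (by simpa using hj)
  · intro i _; simp
  · simp

lemma zmod_const {k : Type} {N : ℕ} [NeZero N] (c : ZMod N → k) (h : ∀ i, c (i + 1) = c i)
    (i : ZMod N) : c i = c 0 := by
  have : ∀ j : ℕ, c (j : ZMod N) = c 0 := fun j => by
    induction j with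
    | zero => simp
    | succ j ih => rw [Nat.cast_succ, h, ih]
  simpa using this i.val

lemma zmod_integrate {k : Type} [Field k] {N : ℕ} [NeZero N] (q : ZMod N → k)
    (hq : ∑ i, q i = 0) : ∃ p : ZMod N → k, ∀ i, p (i + 1) - p i = q i := by
  classical
  let D : (ZMod N → k) →ₗ[k] (ZMod N → k) :=
    LinearMap.funLeft k k (· + 1) - LinearMap.id
  have : q ∈ LinearMap.range D := by
    refine mem_of_dual _ (fun c hc => ?_) q hq
    have : ∀ i, c (i + 1) = c i := fun i => by
      have := hc _ ⟨Pi.single (i + 1) 1, rfl⟩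
      simp [D, LinearMap.funLeft, Pi.single_apply, sub_mul, Finset.sum_sub_distrib] at this
      rw [sub_eq_zero] at this
      exact this.symm
    intro i j
    rw [zmod_const c this i, zmod_const c this j]
  obtain ⟨p, hp⟩ := this
  exact ⟨p, fun i => congrFun hp i⟩

variable {k : Type} [Field k] {m : ℕ} [NeZero m]

lemma quat_const {c : QuaternionGroup m → k} (hx : ∀ h, c (a 1 * h) = c h)
    (hy : ∀ h, c (xa 0 * h) = c h) (g : QuaternionGroup m) : c g = c 1 := by
  have ha : ∀ i, c (a i) = c (a 0) :=
    zmod_const (fun i => c (a i)) fun i => by rw [← hx (a i), a_mul_a, add_comm]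
  rcases g with i | i
  · rw [ha]; rfl
  · have := hy (a i)
    rw [xa_mul_a, zero_add] at this
    rw [this, ha]; rfl

variable (k m) in
/-- the space of functions -/
abbrev Fn := QuaternionGroup m → k

/-- left translation operator -/
def lm (g : QuaternionGroup m) : Module.End k (Fn k m) := LinearMap.funLeft k k (g * ·)

lemma lm_apply (g : QuaternionGroup m) (f : Fn k m) (h : QuaternionGroup m) :
    lm g f h = f (g * h) := rfl

lemma lm_mul (g h : QuaternionGroup m) : (lm g * lm h : Module.End k (Fn k m)) = lm (h * g) := by
  ext f x
  simp [lm_apply, mul_assoc]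

lemma lm_one : (lm 1 : Module.End k (Fn k m)) = 1 := by
  ext f x
  simp [lm_apply]

variable (k m) in
/-- operator X -/
def X : Module.End k (Fn k m) := lm (a 1)
variable (k m) in
/-- operator Y -/
def Y : Module.End k (Fn k m) := lm (xa 0)
variable (k m) in
/-- operator L -/
def L : Module.End k (Fn k m) := ∑ j ∈ Finset.range m, X k m ^ j

lemma X_pow (j : ℕ) : X k m ^ j = lm (a (j : ZMod (2 * m))) := by
  induction j with
  | zero => simp [lm_one]
  | succ j ih => rw [pow_succ, ih, X, lm_mul]; simp [add_comm]

lemma YY : Y k m * Y k m = X k m ^ m := by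
  rw [X_pow, Y, lm_mul]; simp

lemma XYX : X k m * (Y k m * X k m) = Y k m := by
  simp [X, Y, lm_mul]

lemma XXm : X k m ^ m * X k m ^ m = 1 := by
  rw [← pow_add, X_pow, ← two_mul, ZMod.natCast_self, a_zero, lm_one]

lemma LX : L k m * (X k m - 1) = X k m ^ m - 1 := geom_sum_mul _ _
lemma XL : (X k m - 1) * L k m = X k m ^ m - 1 := mul_geom_sum _ _

lemma powY (j : ℕ) : X k m ^ j * Y k m * X k m ^ j = Y k m := by
  induction j with
  | zero => simp
  | succ j ih =>
    calc X k m ^ (j + 1) * Y k m * X k m ^ (j + 1)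
        = X k m ^ j * (X k m * (Y k m * X k m)) * X k m ^ j := by
          nth_rw 1 [pow_succ]
          rw [pow_succ']; simp only [mul_assoc]
      _ = _ := by rw [XYX, ih]

lemma LXY : L k m * (X k m * Y k m) = Y k m * (X k m ^ m * L k m) := by
  rw [L, Finset.sum_mul, Finset.mul_sum, Finset.mul_sum,
    ← Finset.sum_range_reflect (fun i => Y k m * (X k m ^ m * X k m ^ i))]
  refine Finset.sum_congr rfl fun j hj => ?_
  have hj : j < m := by simpa using hj
  have h1 : X k m ^ (j + 1) * (X k m ^ m * X k m ^ (m - 1 - j)) = 1 := by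
    rw [← pow_add, ← pow_add, ← XXm, ← pow_add]
    congr 1
    omega
  calc X k m ^ j * (X k m * Y k m)
      = X k m ^ (j + 1) * Y k m * (X k m ^ (j + 1) * (X k m ^ m * X k m ^ (m - 1 - j))) := by
        rw [h1, mul_one, pow_succ, mul_assoc]
    _ = (X k m ^ (j + 1) * Y k m * X k m ^ (j + 1)) * (X k m ^ m * X k m ^ (m - 1 - j)) := by
        simp only [mul_assoc]
    _ = _ := by rw [powY]

lemma rel1 : L k m * (X k m - 1) - (1 + Y k m) * (Y k m - 1) = 0 := by
  rw [LX, ← YY]; (simp only [mul_add, add_mul, mul_sub, sub_mul, mul_one, one_mul, mul_assoc]; abel)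

lemma rel2 : (1 + X k m * Y k m) * (X k m - 1) + (X k m - 1) * (Y k m - 1) = 0 := by
  have : (1 + X k m * Y k m) * (X k m - 1) + (X k m - 1) * (Y k m - 1) =
    X k m * (Y k m * X k m) - Y k m := by (simp only [mul_add, add_mul, mul_sub, sub_mul, mul_one, one_mul, mul_assoc]; abel)
  rw [this, XYX, sub_self]

lemma rel3 : (X k m - 1) * L k m + (1 - X k m * Y k m) * (1 + X k m * Y k m) = 0 := by
  have : (1 - X k m * Y k m) * (1 + X k m * Y k m) = 1 - X k m * (Y k m * X k m) * Y k m := by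
    (simp only [mul_add, add_mul, mul_sub, sub_mul, mul_one, one_mul, mul_assoc]; abel)
  rw [this, XL, XYX, YY]; abel

lemma rel4 : (1 - X k m * Y k m) * (X k m - 1) - (X k m - 1) * (1 + Y k m) = 0 := by
  have : (1 - X k m * Y k m) * (X k m - 1) - (X k m - 1) * (1 + Y k m) =
    Y k m - X k m * (Y k m * X k m) := by (simp only [mul_add, add_mul, mul_sub, sub_mul, mul_one, one_mul, mul_assoc]; abel)
  rw [this, XYX, sub_self]

/-- key: cocycle relations force vanishing of the norm of `f` -/
lemma norm_zero (f g : Fn k m) (h1 : L k m f - (1 + Y k m) g = 0)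
    (h2 : (1 + X k m * Y k m) f + (X k m - 1) g = 0) :
    (∑ j ∈ Finset.range (2 * m), X k m ^ j) f = 0 := by
  have hN : ∑ j ∈ Finset.range (2 * m), X k m ^ j = L k m + X k m ^ m * L k m := by
    rw [two_mul, Finset.sum_range_add, L, Finset.mul_sum]
    simp only [pow_add]
  have e1 : L k m f = (1 + Y k m) g := sub_eq_zero.1 h1
  have e2 := congrArg (L k m) h2
  rw [map_add, map_zero, ← Module.End.mul_apply, ← Module.End.mul_apply, LX, mul_add, mul_one,
    LXY, ← YY] at e2
  rw [hN, ← YY]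
  simp only [LinearMap.add_apply, LinearMap.sub_apply, Module.End.mul_apply, e1,
    Module.End.one_apply, map_add] at e2 ⊢
  have hY4 : Y k m (Y k m (Y k m (Y k m g))) = g := by
    have : (Y k m * Y k m) * (Y k m * Y k m) = 1 := by rw [YY, XXm]
    exact congrArg (fun T : Module.End k (Fn k m) => T g) this
  rw [hY4] at e2
  rw [← e2]
  abel

lemma integrate (f : Fn k m) (hf : (∑ j ∈ Finset.range (2 * m), X k m ^ j) f = 0) :
    ∃ p, (X k m - 1) p = f := by
  have hs : ∀ h, ∑ j ∈ Finset.range (2 * m), f (a (j : ZMod (2 * m)) * h) = 0 := fun h => by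
    have := congrFun hf h
    simpa [LinearMap.sum_apply, X_pow, lm_apply] using this
  have ha : ∑ i : ZMod (2 * m), f (a i) = 0 := by
    rw [← sum_range_zmod (2 * m) fun i => f (a i), ← hs 1]
    simp
  have hb : ∑ i : ZMod (2 * m), f (xa i) = 0 := by
    rw [← Equiv.sum_comp (Equiv.neg _)]
    simp only [Equiv.neg_apply]
    rw [← sum_range_zmod (2 * m) fun i => f (xa (-i)), ← hs (xa 0)]
    simp
  obtain ⟨p, hp⟩ := zmod_integrate _ ha
  obtain ⟨q, hq⟩ := zmod_integrate (fun i : ZMod (2 * m) => - f (xa (i + 1))) (by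
    rw [Finset.sum_neg_distrib, neg_eq_zero, ← hb]
    exact Equiv.sum_comp (Equiv.addRight (1 : ZMod (2 * m))) (fun i => f (xa i)))
  refine ⟨fun g => match g with
    | a i => p i
    | xa i => q i, ?_⟩
  ext g
  rcases g with i | i
  · simp only [LinearMap.sub_apply, X, Pi.sub_apply, lm_apply, a_mul_a, Module.End.one_apply]
    rw [add_comm, hp]
  · simp only [LinearMap.sub_apply, X, Pi.sub_apply, lm_apply, a_mul_xa, Module.End.one_apply]
    have := hq (i - 1)
    rw [sub_add_cancel] at this
    rw [← neg_sub, this, neg_neg]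

lemma exact1 (f g : Fn k m) (h1 : L k m f - (1 + Y k m) g = 0)
    (h2 : (1 + X k m * Y k m) f + (X k m - 1) g = 0) :
    ∃ p, (X k m - 1) p = f ∧ (Y k m - 1) p = g := by
  obtain ⟨p, hp⟩ := integrate f (norm_zero f g h1 h2)
  obtain ⟨g', hg⟩ : ∃ g', g' = g - (Y k m - 1) p := ⟨_, rfl⟩
  have r1 : (1 + Y k m) g' = 0 := by
    have : (L k m * (X k m - 1)) p - ((1 + Y k m) * (Y k m - 1)) p = 0 :=
      congrArg (fun T : Module.End k (Fn k m) => T p) (rel1 (k := k) (m := m))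
    rw [Module.End.mul_apply, Module.End.mul_apply, hp] at this
    rw [hg, map_sub, sub_eq_zero, ← sub_eq_zero.1 h1]
    exact sub_eq_zero.1 this
  have r2 : (X k m - 1) g' = 0 := by
    have : ((1 + X k m * Y k m) * (X k m - 1)) p + ((X k m - 1) * (Y k m - 1)) p = 0 :=
      congrArg (fun T : Module.End k (Fn k m) => T p) (rel2 (k := k) (m := m))
    rw [Module.End.mul_apply, Module.End.mul_apply, hp, ← h2] at this
    rw [hg, map_sub, sub_eq_zero]
    exact (add_left_cancel this).symm
  have ha : ∀ i, g' (a i) = g' (a 0) :=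
    zmod_const (fun i => g' (a i)) fun i => by
      have := congrFun r2 (a i)
      simp only [LinearMap.sub_apply, X, Pi.sub_apply, lm_apply, a_mul_a, Module.End.one_apply,
        Pi.zero_apply, sub_eq_zero] at this
      rw [← this, add_comm]
  have hb : ∀ i, g' (xa i) = - g' (a 0) := fun i => by
    have := congrFun r1 (a i)
    simp only [LinearMap.add_apply, Y, Pi.add_apply, lm_apply, xa_mul_a, Module.End.one_apply,
        Pi.zero_apply, zero_add] at this
    rw [← ha i]
    exact eq_neg_of_add_eq_zero_right this
  let q : Fn k m := fun g => match g with
    | a _ => 0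
    | xa _ => g' (a 0)
  have hq1 : (X k m - 1) q = 0 := by
    ext h
    rcases h with i | i <;>
    simp [LinearMap.sub_apply, X, Pi.sub_apply, lm_apply, q]
  have hq2 : (Y k m - 1) q = g' := by
    ext h
    rcases h with i | i
    · rw [ha]
      simp [LinearMap.sub_apply, Y, Pi.sub_apply, lm_apply, q]
    · rw [hb]
      simp [LinearMap.sub_apply, Y, Pi.sub_apply, lm_apply, q]
  refine ⟨p + q, ?_, ?_⟩
  · rw [map_add, hp, hq1, add_zero]
  · rw [map_add, hq2, hg]; abel

lemma exact3 (w : Fn k m) (hw : ∑ g, w g = 0) :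
    ∃ u v, (X k m - 1) u + (1 - X k m * Y k m) v = w := by
  classical
  let D : (Fn k m × Fn k m) →ₗ[k] Fn k m := (X k m - 1).coprod (1 - X k m * Y k m)
  have : w ∈ LinearMap.range D := by
    refine mem_of_dual _ (fun c hc => ?_) w hw
    have hx : ∀ h, c (a 1 * h) = c h := fun h => by
      have := hc _ ⟨(Pi.single (a 1 * h) 1, 0), rfl⟩
      simp [D, X, lm_apply, Pi.single_apply, sub_mul, Finset.sum_sub_distrib] at this
      rw [sub_eq_zero] at this
      exact this.symm
    have hy : ∀ h, c (xa 0 * h) = c h := fun h => by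
      have := hc _ ⟨(0, Pi.single (xa 0 * h) 1), rfl⟩
      simp [D, X, Y, lm_apply, Pi.single_apply, sub_mul, Finset.sum_sub_distrib,
        -a_mul_a, -a_mul_xa, -xa_mul_a, -xa_mul_xa] at this
      have e : ∀ x, a 1 * x = h ↔ x = (a 1)⁻¹ * h := fun x => by
        rw [eq_inv_mul_iff_mul_eq]
      simp only [e, Finset.sum_ite_eq', Finset.mem_univ, if_true] at this
      rw [sub_eq_zero] at this
      rw [this, ← hx, mul_inv_cancel_left]
    intro i j
    rw [quat_const hx hy i, quat_const hx hy j]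
  obtain ⟨⟨u, v⟩, hp⟩ := this
  exact ⟨u, v, hp⟩

lemma lm_const (g : QuaternionGroup m) (c : k) : lm g (fun _ => c : Fn k m) = fun _ => c := rfl

lemma X_const (c : k) : X k m (fun _ => c) = fun _ => c := rfl
lemma Y_const (c : k) : Y k m (fun _ => c) = fun _ => c := rfl
lemma L_const (c : k) : L k m (fun _ => c) = fun _ => m * c := by
  ext g
  simp [L, X_pow, lm_const, LinearMap.sum_apply]

/-- commutation with right translations -/
def Comm (T : Module.End k (Fn k m)) : Prop :=
  ∀ g f, T (funρ k (QuaternionGroup m) k g f) = funρ k (QuaternionGroup m) k g (T f)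

lemma comm_lm (g : QuaternionGroup m) : Comm (k := k) (lm g) := fun h f => by
  ext x
  simp [lm_apply, mul_assoc]

lemma Comm.add {S T : Module.End k (Fn k m)} (hS : Comm S) (hT : Comm T) : Comm (S + T) :=
  fun g f => by rw [LinearMap.add_apply, hS, hT, LinearMap.add_apply, map_add]
lemma Comm.sub {S T : Module.End k (Fn k m)} (hS : Comm S) (hT : Comm T) : Comm (S - T) :=
  fun g f => by rw [LinearMap.sub_apply, hS, hT, LinearMap.sub_apply, map_sub]
lemma Comm.mul {S T : Module.End k (Fn k m)} (hS : Comm S) (hT : Comm T) : Comm (S * T) :=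
  fun g f => by rw [Module.End.mul_apply, hT, hS, Module.End.mul_apply]
lemma comm_one : Comm (1 : Module.End k (Fn k m)) := fun _ _ => rfl
lemma comm_X : Comm (X k m) := comm_lm _
lemma comm_Y : Comm (Y k m) := comm_lm _
lemma comm_L : Comm (L k m) := fun g f => by
  simp only [L, LinearMap.sum_apply, map_sum, X_pow]
  exact Finset.sum_congr rfl fun j _ => comm_lm _ _ _

/-- first component -/
def fs : (QuaternionGroup m → k × k) →ₗ[k] Fn k m := (LinearMap.fst k k k).compLeft _
/-- second component -/
def sn : (QuaternionGroup m → k × k) →ₗ[k] Fn k m := (LinearMap.snd k k k).compLeft _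
/-- pairing -/
def pr {M : Type} [AddCommGroup M] [Module k M] (S T : M →ₗ[k] Fn k m) :
    M →ₗ[k] (QuaternionGroup m → k × k) where
  toFun x h := (S x h, T x h)
  map_add' _ _ := by ext <;> simp
  map_smul' _ _ := by ext <;> simp

lemma fs_pr {M : Type} [AddCommGroup M] [Module k M] (S T : M →ₗ[k] Fn k m) (x : M) :
    fs (pr S T x) = S x := rfl
lemma sn_pr {M : Type} [AddCommGroup M] [Module k M] (S T : M →ₗ[k] Fn k m) (x : M) :
    sn (pr S T x) = T x := rfl
lemma pr_ext {F F' : QuaternionGroup m → k × k} (h1 : fs F = fs F') (h2 : sn F = sn F') :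
    F = F' := funext fun g => Prod.ext (congrFun h1 g) (congrFun h2 g)

variable (k m)

/-- constants -/
def D00 : k →ₗ[k] Fn k m := LinearMap.pi fun _ => LinearMap.id
/-- differential -/
def D0 : Fn k m →ₗ[k] (QuaternionGroup m → k × k) := pr (X k m - 1) (Y k m - 1)
/-- differential -/
def D1 : (QuaternionGroup m → k × k) →ₗ[k] (QuaternionGroup m → k × k) :=
  pr (L k m ∘ₗ fs - (1 + Y k m) ∘ₗ sn) ((1 + X k m * Y k m) ∘ₗ fs + (X k m - 1) ∘ₗ sn)
/-- differential -/
def D2 : (QuaternionGroup m → k × k) →ₗ[k] Fn k m :=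
  (X k m - 1) ∘ₗ fs + (1 - X k m * Y k m) ∘ₗ sn
/-- sum -/
def D3 : Fn k m →ₗ[k] k := ∑ g, LinearMap.proj g

lemma D3_apply (f : Fn k m) : D3 k m f = ∑ g, f g := by simp [D3]

lemma D10 (p : Fn k m) : D1 k m (D0 k m p) = 0 := by
  refine pr_ext ?_ ?_
  · exact congrArg (fun T : Module.End k (Fn k m) => T p) (rel1 (k := k) (m := m))
  · exact congrArg (fun T : Module.End k (Fn k m) => T p) (rel2 (k := k) (m := m))

lemma D21 (F : QuaternionGroup m → k × k) : D2 k m (D1 k m F) = 0 := by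
  have h1 := congrArg (fun T : Module.End k (Fn k m) => T (fs F)) (rel3 (k := k) (m := m))
  have h2 := congrArg (fun T : Module.End k (Fn k m) => T (sn F)) (rel4 (k := k) (m := m))
  have : D2 k m (D1 k m F) =
    ((X k m - 1) * L k m + (1 - X k m * Y k m) * (1 + X k m * Y k m)) (fs F) +
    ((1 - X k m * Y k m) * (X k m - 1) - (X k m - 1) * (1 + Y k m)) (sn F) := by
    simp only [D2, D1, LinearMap.add_apply (_ ∘ₗ _), LinearMap.comp_apply, fs_pr, sn_pr,
      LinearMap.sub_apply (_ ∘ₗ _), LinearMap.add_apply (_ * _), LinearMap.sub_apply (_ * _),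
      Module.End.mul_apply, map_add, map_sub]
    abel
  rw [this]
  rw [h1, h2]
  simp

lemma sum_lm (g : QuaternionGroup m) (f : Fn k m) : ∑ h, lm g f h = ∑ h, f h :=
  Equiv.sum_comp (Equiv.mulLeft g) f

lemma D32 (F : QuaternionGroup m → k × k) : D3 k m (D2 k m F) = 0 := by
  simp [D3_apply, D2, X, Y, sum_lm, Finset.sum_add_distrib, Finset.sum_sub_distrib]

lemma ker0 (p : Fn k m) (h : D0 k m p = 0) : ∃ c, D00 k m c = p := by
  have h1 : (X k m - 1) p = 0 := congrArg fs h
  have h2 : (Y k m - 1) p = 0 := congrArg sn h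
  refine ⟨p 1, funext fun g => (quat_const (fun h => ?_) (fun h => ?_) g).symm⟩
  · exact sub_eq_zero.1 (congrFun h1 h)
  · exact sub_eq_zero.1 (congrFun h2 h)

lemma ker1 (F : QuaternionGroup m → k × k) (h : D1 k m F = 0) : ∃ p, D0 k m p = F := by
  have h1 : L k m (fs F) - (1 + Y k m) (sn F) = 0 := congrArg fs h
  have h2 : (1 + X k m * Y k m) (fs F) + (X k m - 1) (sn F) = 0 := congrArg sn h
  obtain ⟨p, hp, hp'⟩ := exact1 _ _ h1 h2
  exact ⟨p, pr_ext hp hp'⟩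

lemma ker3 (w : Fn k m) (h : D3 k m w = 0) : ∃ F, D2 k m F = w := by
  obtain ⟨u, v, huv⟩ := exact3 w (by rw [← D3_apply, h])
  exact ⟨fun g => (u g, v g), huv⟩

lemma D00_inj : Function.Injective (D00 k m) := fun _ _ h => congrFun h 1

lemma D3_surj : Function.Surjective (D3 k m) := fun c => by
  classical
  exact ⟨Pi.single 1 c, by simp [D3_apply]⟩

lemma ker2 (F : QuaternionGroup m → k × k) (h : D2 k m F = 0) : ∃ F', D1 k m F' = F := by
  have k0 : LinearMap.ker (D0 k m) = LinearMap.range (D00 k m) := by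
    ext p
    refine ⟨fun h => ker0 k m p h, ?_⟩
    rintro ⟨c, rfl⟩
    refine pr_ext ?_ ?_
    · exact sub_self _
    · exact sub_self _
  have k1 : LinearMap.ker (D1 k m) = LinearMap.range (D0 k m) := by
    ext p
    refine ⟨fun h => ker1 k m p h, ?_⟩
    rintro ⟨c, rfl⟩
    exact D10 k m c
  have k3 : LinearMap.ker (D3 k m) = LinearMap.range (D2 k m) := by
    ext p
    refine ⟨fun h => ker3 k m p h, ?_⟩
    rintro ⟨c, rfl⟩
    exact D32 k m c
  have f0 := LinearMap.finrank_range_add_finrank_ker (D0 k m)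
  have f1 := LinearMap.finrank_range_add_finrank_ker (D1 k m)
  have f2 := LinearMap.finrank_range_add_finrank_ker (D2 k m)
  have f3 := LinearMap.finrank_range_add_finrank_ker (D3 k m)
  rw [k0, LinearMap.finrank_range_of_inj (D00_inj k m)] at f0
  rw [k1] at f1
  rw [k3, LinearMap.range_eq_top.2 (D3_surj k m), finrank_top] at f3
  have hle : LinearMap.range (D1 k m) ≤ LinearMap.ker (D2 k m) := by
    rintro _ ⟨c, rfl⟩
    exact D21 k m c
  have := Submodule.eq_of_le_of_finrank_eq hle (by omega)
  have hF : F ∈ LinearMap.ker (D2 k m) := h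
  rw [← this] at hF
  exact hF

end Algebra

section Final

variable (k : Type) [Field k] (m : ℕ) [NeZero m]

local notation "Q" => QuaternionGroup m

/-- morphism -/
noncomputable def E00 : Rep.trivial k Q k ⟶ funRep k Q k :=
  Rep.ofHom ((D00 k m).intertwiningMap_of_isIntertwiningMap _ _ fun _ _ => rfl)
/-- morphism -/
noncomputable def E0 : funRep k Q k ⟶ funRep k Q (k × k) :=
  Rep.ofHom ((D0 k m).intertwiningMap_of_isIntertwiningMap _ _ fun g f =>
    pr_ext ((comm_X.sub comm_one) g f) ((comm_Y.sub comm_one) g f))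
/-- morphism -/
noncomputable def E1 : funRep k Q (k × k) ⟶ funRep k Q (k × k) :=
  Rep.ofHom ((D1 k m).intertwiningMap_of_isIntertwiningMap _ _ fun g f =>
    pr_ext
      (congrArg₂ (· - ·) (comm_L g (fs f)) ((comm_one.add comm_Y) g (sn f)))
      (congrArg₂ (· + ·) ((comm_one.add (comm_X.mul comm_Y)) g (fs f))
        ((comm_X.sub comm_one) g (sn f))))
/-- morphism -/
noncomputable def E2 : funRep k Q (k × k) ⟶ funRep k Q k :=
  Rep.ofHom ((D2 k m).intertwiningMap_of_isIntertwiningMap _ _ fun g f =>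
      (congrArg₂ (· + ·) ((comm_X.sub comm_one) g (fs f))
        ((comm_one.sub (comm_X.mul comm_Y)) g (sn f))))
/-- morphism -/
noncomputable def E3 : funRep k Q k ⟶ Rep.trivial k Q k :=
  Rep.ofHom ((D3 k m).intertwiningMap_of_isIntertwiningMap _ _ fun g f => by
    rw [D3_apply, Representation.trivial_apply, D3_apply]
    exact Equiv.sum_comp (Equiv.mulRight g) f)

lemma inv_const {V : Type} [AddCommGroup V] [Module k V] (f : Q → V)
    (hf : f ∈ (funRep k Q V).ρ.invariants) : f = fun _ => f 1 :=
  funext fun g => mem_invariants_funρ hf g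

lemma quat_result [CharP k 2] (hm : Even m) :
    hdim (Rep.trivial k Q k) 0 = 1 ∧
    hdim (Rep.trivial k Q k) 1 = 2 ∧
    hdim (Rep.trivial k Q k) 2 = 2 ∧
    hdim (Rep.trivial k Q k) 3 = 1 ∧
    ∀ n, hdim (Rep.trivial k Q k) (n + 4) = hdim (Rep.trivial k Q k) n := by
  have hm0 : (m : k) = 0 := (CharP.cast_eq_zero_iff k 2 m).2 hm.two_dvd
  have h2 : ∀ x : k, x + x = 0 := CharTwo.add_self_eq_zero
  have : Mono (E00 k m) := (Rep.mono_iff_injective _).2 (D00_inj k m)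
  have : Epi (E3 k m) := (Rep.epi_iff_surjective _).2 (D3_surj k m)
  have w0 : E00 k m ≫ E0 k m = 0 := by
    exact comp_zero_of _ _ fun c => pr_ext (sub_self _) (sub_self _)
  have w1 : E0 k m ≫ E1 k m = 0 := by
    exact comp_zero_of _ _ fun c => D10 k m c
  have w2 : E1 k m ≫ E2 k m = 0 := by
    exact comp_zero_of _ _ fun c => D21 k m c
  have w3 : E2 k m ≫ E3 k m = 0 := by
    exact comp_zero_of _ _ fun c => D32 k m c
  have := periodic (E00 k m) (E0 k m) (E1 k m) (E2 k m) (E3 k m) w0 w1 w2 w3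
    (exact_of _ _ _ (ker0 k m)) (exact_of _ _ _ (ker1 k m)) (exact_of _ _ _ (ker2 k m))
    (exact_of _ _ _ (ker3 k m))
    (fun x hx => by
      obtain ⟨c, rfl⟩ : ∃ c, x = fun _ => c := ⟨_, inv_const k m x hx⟩
      exact pr_ext (sub_self _) (sub_self _))
    (fun x hx => by
      obtain ⟨c, rfl⟩ : ∃ c, x = fun _ => c := ⟨_, inv_const k m x hx⟩
      refine pr_ext ?_ ?_
      · change L k m (fun _ => c.1) - ((fun _ => c.2) + (fun _ => c.2)) = 0
        rw [L_const]
        ext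
        simp [hm0, h2]
      · change ((fun _ => c.1) + (fun _ => c.1)) + ((fun _ => c.2) - (fun _ => c.2)) = 0
        ext
        simp [h2])
    (fun x hx => by
      obtain ⟨c, rfl⟩ : ∃ c, x = fun _ => c := ⟨_, inv_const k m x hx⟩
      change ((fun _ => c.1) - (fun _ => c.1)) + ((fun _ => c.2) - (fun _ => c.2)) = 0
      simp)
    (fun x hx => by
      obtain ⟨c, rfl⟩ : ∃ c, x = fun _ => c := ⟨_, inv_const k m x hx⟩
      change D3 k m _ = 0
      rw [D3_apply]
      simp [QuaternionGroup.card, hm0])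
  simpa using this

end Final

end QuatCoh

/-- For `k` a field of characteristic `2`, `n ≥ 4`, and `Q_{2^n}` the generalized quaternion
group of order `2^n` (`QuaternionGroup (2^(n-2))`, of order `4 * 2^(n-2) = 2^n`), the
dimensions of `H^s(Q_{2^n}; k)` are 4-periodic: `dim H^s = 1` if `s ≡ 0, 3 (mod 4)` and
`dim H^s = 2` if `s ≡ 1, 2 (mod 4)`. -/
theorem groupCohomology_generalized_quaternion_dimensions
    (k : Type) [Field k] [CharP k 2] (n : ℕ) (hn : 4 ≤ n) (s : ℕ) :
    Module.finrank k
        (groupCohomology (Rep.trivial k (QuaternionGroup (2 ^ (n - 2))) k) s) =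
      if s % 4 = 0 ∨ s % 4 = 3 then 1 else 2 := by
  obtain ⟨h0, h1, h2, h3, h4⟩ := QuatCoh.quat_result k (2 ^ (n - 2))
    ((Nat.even_pow.2 ⟨even_two, by omega⟩))
  change QuatCoh.hdim _ s = _
  induction s using Nat.strong_induction_on with
  | _ s ih =>
    match s, ih with
    | 0, _ => simpa using h0
    | 1, _ => simpa using h1
    | 2, _ => simpa using h2
    | 3, _ => simpa using h3
    | s + 4, ih =>
      rw [h4 s, ih s (by omega), Nat.add_mod_right]
end
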